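/- Let A = {(x, y, z) ∈ ℝ³ : z ≥ x² + y⁴} and B = {(x, y, 0) : (x, y) ∈ ℝ²}. Let {(x_k, y_k)} ⊆ ℝ² be defined by (x_{k+1}, y_{k+1}, 0) = P_B(P_A((x_k, y_k, 0))) for k = 0, 1, 2, …. If y_0 ≠ 0, then ‖(x_k, y_k)‖ = Θ(k^{−1/6}) as k → ∞, i.e., there exist constants 0 < C_1 ≤ C_2 and K such that C_1 k^{−1/6} ≤ ‖(x_k, y_k)‖ ≤ C_2 k^{−1/6} for all k ≥ K. -/

import Mathlib

open Filter

/-- `u` is the metric projection of `p` onto `S`. -/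
def IsMetricProj {E : Type*} [NormedAddCommGroup E] (S : Set E) (p u : E) : Prop :=
  u ∈ S ∧ ∀ s ∈ S, ‖u - p‖ ≤ ‖s - p‖

/-- The point (a, b, c) of Euclidean 3-space. -/
noncomputable def e3 (a b c : ℝ) : EuclideanSpace ℝ (Fin 3) :=
  (WithLp.equiv 2 (Fin 3 → ℝ)).symm ![a, b, c]

lemma e3_norm_sq (q : EuclideanSpace ℝ (Fin 3)) : ‖q‖ ^ 2 = q 0 ^ 2 + q 1 ^ 2 + q 2 ^ 2 := by
  rw [EuclideanSpace.norm_sq_eq, Fin.sum_univ_three]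
  simp

lemma step_eqs (a b u v : ℝ) (w : EuclideanSpace ℝ (Fin 3))
    (h1 : IsMetricProj {p : EuclideanSpace ℝ (Fin 3) | p 0 ^ 2 + p 1 ^ 4 ≤ p 2} (e3 a b 0) w)
    (h2 : IsMetricProj {p : EuclideanSpace ℝ (Fin 3) | p 2 = 0} w (e3 u v 0)) :
    a = u * (1 + 2 * (u ^ 2 + v ^ 4)) ∧ b = v * (1 + 4 * v ^ 2 * (u ^ 2 + v ^ 4)) := by
  obtain ⟨hw, hmin⟩ := h1
  obtain ⟨-, hmin2⟩ := h2
  have key := hmin2 (e3 (w 0) (w 1) 0) (by simp [e3])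
  have key2 := pow_le_pow_left₀ (norm_nonneg _) key 2
  rw [e3_norm_sq, e3_norm_sq] at key2
  simp [e3] at key2
  have hu : w 0 = u := by nlinarith [sq_nonneg (u - w 0), sq_nonneg (v - w 1)]
  have hv : w 1 = v := by nlinarith [sq_nonneg (u - w 0), sq_nonneg (v - w 1)]
  have hw' : u ^ 2 + v ^ 4 ≤ w 2 := by
    have : w 0 ^ 2 + w 1 ^ 4 ≤ w 2 := hw
    rwa [hu, hv] at this
  have F : ∀ s t : ℝ, (u - a) ^ 2 + (v - b) ^ 2 + (u ^ 2 + v ^ 4) ^ 2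
      ≤ (s - a) ^ 2 + (t - b) ^ 2 + (s ^ 2 + t ^ 4) ^ 2 := by
    intro s t
    have h := pow_le_pow_left₀ (norm_nonneg _) (hmin (e3 s t (s ^ 2 + t ^ 4)) (by simp [e3])) 2
    rw [e3_norm_sq, e3_norm_sq] at h
    simp [e3, hu, hv] at h
    have h3 : (u ^ 2 + v ^ 4) ^ 2 ≤ w 2 ^ 2 := pow_le_pow_left₀ (by positivity) hw' 2
    linarith
  constructor
  · have hd : HasDerivAt (fun s : ℝ => (s - a) ^ 2 + (v - b) ^ 2 + (s ^ 2 + v ^ 4) ^ 2)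
        (2 * (u - a) + 2 * (u ^ 2 + v ^ 4) * (2 * u)) u := by
      have := ((((hasDerivAt_id u).sub_const a).pow 2).add_const ((v - b) ^ 2)).add
        ((((hasDerivAt_id u).pow 2).add_const (v ^ 4)).pow 2)
      refine HasDerivAt.congr_deriv this ?_
      simp
    have hm : IsLocalMin (fun s : ℝ => (s - a) ^ 2 + (v - b) ^ 2 + (s ^ 2 + v ^ 4) ^ 2) u :=
      Eventually.of_forall fun s => F s v
    have := hm.hasDerivAt_eq_zero hd
    linarith
  · have hd : HasDerivAt (fun s : ℝ => (u - a) ^ 2 + (s - b) ^ 2 + (u ^ 2 + s ^ 4) ^ 2)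
        (2 * (v - b) + 2 * (u ^ 2 + v ^ 4) * (4 * v ^ 3)) v := by
      have := ((((hasDerivAt_id v).sub_const b).pow 2).const_add ((u - a) ^ 2)).add
        ((((hasDerivAt_id v).pow 4).const_add (u ^ 2)).pow 2)
      refine HasDerivAt.congr_deriv this ?_
      simp
    have hm : IsLocalMin (fun s : ℝ => (u - a) ^ 2 + (s - b) ^ 2 + (u ^ 2 + s ^ 4) ^ 2) v :=
      Eventually.of_forall fun s => F u s
    have := hm.hasDerivAt_eq_zero hd
    linarith

lemma inv_lower (b v T : ℝ) (hv : 0 < v) (hT : v ^ 6 ≤ T) (h : v * (1 + 4 * v ^ 6) ≤ b) :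
    (b ^ 6)⁻¹ + 4 / (1 + 4 * T) ≤ (v ^ 6)⁻¹ := by
  have ht : 0 < v ^ 6 := by positivity
  have h1 : v ^ 6 * (1 + 4 * v ^ 6) ≤ b ^ 6 := by
    calc v ^ 6 * (1 + 4 * v ^ 6) ≤ v ^ 6 * (1 + 4 * v ^ 6) ^ 6 := by
          gcongr
          exact le_self_pow₀ (by linarith) (by norm_num)
      _ = (v * (1 + 4 * v ^ 6)) ^ 6 := by ring
      _ ≤ b ^ 6 := by gcongr
  have h2 : (b ^ 6)⁻¹ ≤ (v ^ 6 * (1 + 4 * v ^ 6))⁻¹ := inv_anti₀ (by positivity) h1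
  have h3 : 4 / (1 + 4 * T) ≤ 4 / (1 + 4 * v ^ 6) := by gcongr
  have h4 : (v ^ 6 * (1 + 4 * v ^ 6))⁻¹ + 4 / (1 + 4 * v ^ 6) = (v ^ 6)⁻¹ := by
    field_simp
  linarith

lemma inv_upper (b v D : ℝ) (hv : 0 < v) (hb : 0 < b) (hD : 0 ≤ D) (h : b ≤ v * (1 + D * v ^ 6)) :
    (v ^ 6)⁻¹ ≤ (b ^ 6)⁻¹ + 6 * D := by
  have ht : 0 < v ^ 6 := by positivity
  set s := D * v ^ 6 with hs
  have hs0 : 0 ≤ s := by positivity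
  have h1 : b ^ 6 ≤ v ^ 6 * (1 + s) ^ 6 := by
    calc b ^ 6 ≤ (v * (1 + s)) ^ 6 := by gcongr
      _ = _ := by ring
  have h2 : (v ^ 6 * (1 + s) ^ 6)⁻¹ ≤ (b ^ 6)⁻¹ := inv_anti₀ (by positivity) h1
  have h3 : 1 - 6 * s ≤ ((1 + s) ^ 6)⁻¹ := by
    have hp : 0 < (1 + s) ^ 6 := by positivity
    rw [← one_div, le_div_iff₀ hp]
    have e : 1 - (1 - 6 * s) * (1 + s) ^ 6
        = 21 * s ^ 2 + 70 * s ^ 3 + 105 * s ^ 4 + 84 * s ^ 5 + 35 * s ^ 6 + 6 * s ^ 7 := by ring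
    have : 0 ≤ 1 - (1 - 6 * s) * (1 + s) ^ 6 := by rw [e]; positivity
    linarith
  have h4 : (v ^ 6)⁻¹ * (1 - 6 * s) ≤ (v ^ 6)⁻¹ * ((1 + s) ^ 6)⁻¹ := by gcongr
  have h5 : (v ^ 6)⁻¹ * (1 - 6 * s) = (v ^ 6)⁻¹ - 6 * D := by
    rw [hs]; field_simp
  rw [mul_inv] at h2
  linarith

lemma core (X Y : ℕ → ℝ) (hX : ∀ k, 0 ≤ X k) (hY : ∀ k, 0 < Y k)
    (h1 : ∀ k, X k = X (k+1) * (1 + 2 * (X (k+1) ^ 2 + Y (k+1) ^ 4)))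
    (h2 : ∀ k, Y k = Y (k+1) * (1 + 4 * Y (k+1) ^ 2 * (X (k+1) ^ 2 + Y (k+1) ^ 4))) :
    ∃ c d M : ℝ, ∃ K : ℕ, 0 < c ∧ 0 < d ∧ 0 ≤ M ∧ ∀ k ≥ K, 1 ≤ k ∧
      c * k ≤ (Y k ^ 6)⁻¹ ∧ (Y k ^ 6)⁻¹ ≤ d * k ∧ X k ≤ M * Y k := by
  have aX : Antitone X := antitone_nat_of_succ_le fun k => by
    rw [h1 k]; nlinarith [mul_nonneg (hX (k+1)) (by positivity : 0 ≤ X (k+1) ^ 2 + Y (k+1) ^ 4)]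
  have aY : Antitone Y := antitone_nat_of_succ_le fun k => by
    have := hY (k+1)
    rw [h2 k]; exact le_mul_of_one_le_right this.le (by linarith [(by positivity : 0 ≤ 4 * Y (k+1) ^ 2 * (X (k+1) ^ 2 + Y (k+1) ^ 4))])
  have hY0 := hY 0
  set c := 4 / (1 + 4 * Y 0 ^ 6) with hc
  have hc0 : 0 < c := by positivity
  have low : ∀ k : ℕ, c * k ≤ (Y k ^ 6)⁻¹ := by
    intro k
    induction k with
    | zero => simp; positivity
    | succ k ih =>
      have hp := hY (k+1)
      have := inv_lower (Y k) (Y (k+1)) (Y 0 ^ 6) hp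
        (pow_le_pow_left₀ hp.le (aY (Nat.zero_le _)) 6) (by
          rw [h2 k]
          refine mul_le_mul_of_nonneg_left ?_ hp.le
          nlinarith [(by positivity : 0 ≤ Y (k+1) ^ 2 * X (k+1) ^ 2)])
      push_cast
      linarith
  set Z := X 0 ^ 2 + Y 0 ^ 4 with hZ
  have hZ0 : 0 ≤ Z := by positivity
  have hZk : ∀ k, X k ^ 2 + Y k ^ 4 ≤ Z := fun k => by
    have := hX k
    have := (hY k).le
    have := aX (Nat.zero_le k)
    have := aY (Nat.zero_le k)
    rw [hZ]; gcongr
  -- eventually Y small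
  obtain ⟨K, hK⟩ : ∃ K : ℕ, ∀ k ≥ K, Y k ^ 2 ≤ 1 / (16 * (Z + 1)) := by
    obtain ⟨K, hK⟩ := exists_nat_ge ((16 * (Z + 1)) ^ 3 / c)
    refine ⟨K, fun k hk => ?_⟩
    have hp := hY k
    have h5 : (16 * (Z + 1)) ^ 3 ≤ (Y k ^ 6)⁻¹ := by
      have : (K : ℝ) ≤ k := by exact_mod_cast hk
      rw [div_le_iff₀ hc0] at hK
      nlinarith [low k]
    have h6 : (Y k ^ 6)⁻¹ = ((Y k ^ 2)⁻¹) ^ 3 := by rw [inv_pow]; ring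
    rw [h6] at h5
    have h7 := le_of_pow_le_pow_left₀ (by norm_num) (by positivity) h5
    rw [one_div]
    exact (le_inv_comm₀ (by positivity) (by positivity)).1 h7
  set K1 := K + 1 with hK1
  have hYK := hY K1
  set M := X K1 / Y K1 ^ 2 with hM
  have hM0 : 0 ≤ M := div_nonneg (hX _) (by positivity)
  have rat : ∀ k ≥ K1, X k ≤ M * Y k ^ 2 := by
    intro k hk
    induction k, hk using Nat.le_induction with
    | base => rw [hM]; field_simp; exact le_rfl
    | succ k hk ih =>
      have hp := hY (k+1)
      have hs := hK (k+1) (by omega)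
      have hz := hZk (k+1)
      set z := X (k+1) ^ 2 + Y (k+1) ^ 4 with hzdef
      have hz0 : 0 ≤ z := by positivity
      have e1 := h1 k
      have e2 := h2 k
      rw [← hzdef] at e1 e2
      have q0 : 0 ≤ Y (k+1) ^ 2 := by positivity
      rw [le_div_iff₀ (by positivity)] at hs
      have q1 : Y (k+1) ^ 2 * z ≤ 1 / 16 := by nlinarith
      have q2 : Y (k+1) ^ 2 ≤ 1 / 16 := by nlinarith
      have q3 : (1 + 4 * Y (k+1) ^ 2 * z) ^ 2 ≤ 1 + 2 * z := by
        nlinarith [mul_nonneg q0 hz0]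
      have q4 : X (k+1) * (1 + 2 * z) ≤ M * Y (k+1) ^ 2 * (1 + 2 * z) := by
        calc X (k+1) * (1 + 2 * z) ≤ M * Y k ^ 2 := by rw [← e1]; exact ih
          _ = M * Y (k+1) ^ 2 * (1 + 4 * Y (k+1) ^ 2 * z) ^ 2 := by rw [e2]; ring
          _ ≤ _ := by gcongr
      exact le_of_mul_le_mul_right q4 (by linarith)
  set D := 4 * (M ^ 2 + 1) with hD
  have hD0 : 0 < D := by positivity
  have up : ∀ k ≥ K1, (Y k ^ 6)⁻¹ ≤ (Y K1 ^ 6)⁻¹ + 6 * D * k := by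
    intro k hk
    induction k, hk using Nat.le_induction with
    | base => exact le_add_of_nonneg_right (by positivity)
    | succ k hk ih =>
      have hp := hY (k+1)
      have := inv_upper (Y k) (Y (k+1)) D hp (hY k) hD0.le (by
        rw [h2 k]
        refine mul_le_mul_of_nonneg_left (add_le_add_right ?_ 1) hp.le
        have r := pow_le_pow_left₀ (hX _) (rat (k+1) (by omega)) 2
        calc 4 * Y (k+1) ^ 2 * (X (k+1) ^ 2 + Y (k+1) ^ 4)
            ≤ 4 * Y (k+1) ^ 2 * ((M * Y (k+1) ^ 2) ^ 2 + Y (k+1) ^ 4) := by gcongr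
          _ = D * Y (k+1) ^ 6 := by rw [hD]; ring)
      push_cast
      linarith
  refine ⟨c, (Y K1 ^ 6)⁻¹ + 6 * D, M * Y 0, K1, hc0, by positivity, by positivity, fun k hk => ?_⟩
  have hk1 : 1 ≤ k := by omega
  have hk1' : (1 : ℝ) ≤ k := by exact_mod_cast hk1
  refine ⟨hk1, low k, ?_, ?_⟩
  · have := up k hk
    have h9 : 0 ≤ (Y K1 ^ 6)⁻¹ := by positivity
    nlinarith
  · have hp := hY k
    calc X k ≤ M * Y k ^ 2 := rat k hk
      _ = M * Y k * Y k := by ring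
      _ ≤ M * Y 0 * Y k := by
        have := aY (Nat.zero_le k)
        gcongr

lemma inv_six (Y : ℝ) (hY : 0 < Y) : ((Y ^ 6)⁻¹) ^ (-(1 : ℝ) / 6) = Y := by
  rw [neg_div, Real.rpow_neg (by positivity), Real.inv_rpow (by positivity), inv_inv,
    ← Real.rpow_natCast, ← Real.rpow_mul hY.le]
  norm_num

theorem stmt16 (A B : Set (EuclideanSpace ℝ (Fin 3)))
    (hA : A = {p | p 0 ^ 2 + p 1 ^ 4 ≤ p 2})
    (hB : B = {p : EuclideanSpace ℝ (Fin 3) | p 2 = 0})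
    (x y : ℕ → ℝ)
    (hstep : ∀ k, ∃ w, IsMetricProj A (e3 (x k) (y k) 0) w ∧
      IsMetricProj B w (e3 (x (k + 1)) (y (k + 1)) 0))
    (hy0 : y 0 ≠ 0) :
    ∃ C₁ C₂ : ℝ, ∃ K : ℕ, 0 < C₁ ∧ C₁ ≤ C₂ ∧ ∀ k ≥ K,
      C₁ * (k : ℝ) ^ (-(1 : ℝ) / 6) ≤ Real.sqrt (x k ^ 2 + y k ^ 2) ∧
      Real.sqrt (x k ^ 2 + y k ^ 2) ≤ C₂ * (k : ℝ) ^ (-(1 : ℝ) / 6) := by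
  subst hA hB
  have hs : ∀ k, x k = x (k+1) * (1 + 2 * (x (k+1) ^ 2 + y (k+1) ^ 4)) ∧
      y k = y (k+1) * (1 + 4 * y (k+1) ^ 2 * (x (k+1) ^ 2 + y (k+1) ^ 4)) := by
    intro k
    obtain ⟨w, hw1, hw2⟩ := hstep k
    exact step_eqs _ _ _ _ w hw1 hw2
  have hyne : ∀ k, y k ≠ 0 := by
    intro k
    induction k with
    | zero => exact hy0
    | succ k ih =>
      intro h
      apply ih
      rw [(hs k).2, h]; simp
  have a4 : ∀ t : ℝ, |t| ^ 4 = t ^ 4 := fun t => by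
    rw [show (4 : ℕ) = 2 * 2 from rfl, pow_mul, pow_mul, sq_abs]
  obtain ⟨c, d, M, K, hc, hd, hM, H⟩ := core (fun k => |x k|) (fun k => |y k|)
    (fun k => abs_nonneg _) (fun k => abs_pos.2 (hyne k))
    (fun k => by
      simp only [sq_abs, a4]
      conv_lhs => rw [(hs k).1]
      rw [abs_mul, abs_of_nonneg (a := 1 + _) (by positivity)])
    (fun k => by
      simp only [sq_abs, a4]
      conv_lhs => rw [(hs k).2]
      rw [abs_mul, abs_of_nonneg (a := 1 + _) (by positivity)])
  have main : ∀ k ≥ K, d ^ (-(1 : ℝ) / 6) * (k : ℝ) ^ (-(1 : ℝ) / 6) ≤ Real.sqrt (x k ^ 2 + y k ^ 2) ∧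
      Real.sqrt (x k ^ 2 + y k ^ 2) ≤ (M + 1) * c ^ (-(1 : ℝ) / 6) * (k : ℝ) ^ (-(1 : ℝ) / 6) := by
    intro k hk
    obtain ⟨hk1, hl, hu, hx⟩ := H k hk
    have hk0 : (0 : ℝ) < k := by exact_mod_cast hk1
    have hp : 0 < |y k| := abs_pos.2 (hyne k)
    have e := inv_six _ hp
    constructor
    · rw [← Real.mul_rpow hd.le hk0.le]
      calc (d * k) ^ (-(1 : ℝ) / 6) ≤ ((|y k| ^ 6)⁻¹) ^ (-(1 : ℝ) / 6) :=
            Real.rpow_le_rpow_of_nonpos (by positivity) hu (by norm_num)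
        _ = |y k| := e
        _ ≤ _ := Real.abs_le_sqrt (by nlinarith [sq_nonneg (x k)])
    · rw [mul_assoc, ← Real.mul_rpow hc.le hk0.le]
      have : |y k| ≤ (c * k) ^ (-(1 : ℝ) / 6) := by
        rw [← e]
        exact Real.rpow_le_rpow_of_nonpos (by positivity) hl (by norm_num)
      calc Real.sqrt (x k ^ 2 + y k ^ 2) ≤ |x k| + |y k| := by
            apply Real.sqrt_le_iff.2
            refine ⟨by positivity, ?_⟩
            rw [← sq_abs (x k), ← sq_abs (y k)]
            nlinarith [mul_nonneg (abs_nonneg (x k)) (abs_nonneg (y k))]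
        _ ≤ (M + 1) * |y k| := by linarith
        _ ≤ _ := by gcongr
  refine ⟨d ^ (-(1 : ℝ) / 6), (M + 1) * c ^ (-(1 : ℝ) / 6), K, by positivity, ?_, main⟩
  have hk1 := (H K le_rfl).1
  have hk0 : (0 : ℝ) < K := by exact_mod_cast hk1
  have := main K le_rfl
  exact le_of_mul_le_mul_right (this.1.trans this.2) (by positivity)
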